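/- Let R be a Noetherian ring, M a finitely generated R-module of dimension d, and x = x_1, ..., x_d a sequence of d elements of R. Then the following are equivalent: (i) H^d_{(x)}(M) = 0; (ii) ⋂_{n ≥ 1} (x_1^n, ..., x_d^n)^lim_M = M; (iii) dim R/Ann(H^d_{(x)}(M)) < d. -/

import Mathlib

/-!
`H^d_{(x)}(M)` is the direct limit of the modules `M/(x₁ⁿ, …, x_dⁿ)M` along the multiplications by
`x₁⋯x_d`: local cohomology is the cohomology of `Γ_{(x)}(I)` for an injective resolution `I` of `M`,
and each new generator `y` contributes the connecting map `∂ : Hʳ_J(M)_y → Hʳ⁺¹_{(J, y)}(M)` of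
`0 → Γ_{(J, y)}(I) → Γ_J(I) → Γ_J(I)_y → 0`, where `J` has `r` generators and so `Hʳ⁺¹_J(M) = 0`.
The class of `m ∈ M` at level `n` dies in the limit exactly when `m` lies in the limit closure of
`x₁ⁿ, …, x_dⁿ`, so the limit closures are all of `M` exactly when the direct limit is zero.

If `A = R/Ann H^d_{(x)}(M)` has dimension less than `d`, then by induction on `d` some power
`(y₁⋯y_d)ᵏ` lies in `(y₁ᵏ⁺¹, …, y_dᵏ⁺¹)A`, for any `yᵢ ∈ A`. Take `yᵢ = xᵢⁿ`: up to an element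
annihilating `H^d_{(x)}(M)`, multiplication by `(x₁⋯x_d)ⁿᵏ` sends the class of `m` at level `n` to
zero at level `n + nk`, and as both represent the same element of the limit, that element is zero.
-/

open IsLocalRing

universe u

/-- The limit closure `(x)^lim_M = ⋃_{n>0} ((x₁^{n+1}, …, x_r^{n+1})M :_M (x₁⋯x_r)^n)` of a
sequence `x = x₁, …, x_r` of elements of `R` in the module `M`; the union of the increasing
family of submodules is expressed as a supremum. -/
def limitClosure {R : Type*} [CommRing R] {M : Type*} [AddCommGroup M] [Module R M]
    {r : ℕ} (x : Fin r → R) : Submodule R M :=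
  ⨆ n : ℕ, (Ideal.span (Set.range fun i => x i ^ (n + 2)) • (⊤ : Submodule R M)).comap
    (LinearMap.lsmul R M ((∏ i, x i) ^ (n + 1)))

/-- The dimension of a module `M`: the Krull dimension of `R ⧸ Ann M`. -/
noncomputable def moduleDim (R M : Type*) [CommRing R] [AddCommGroup M] [Module R M] :
    WithBot ℕ∞ :=
  ringKrullDim (R ⧸ Module.annihilator R M)

section PowIdeal

variable {R : Type*} [CommRing R] {ι : Type*}

/-- The ideal `(x₁ⁿ, …, x_rⁿ)` of a family `x = x₁, …, x_r`. -/
def powIdeal (x : ι → R) (n : ℕ) : Ideal R := Ideal.span (Set.range fun i => x i ^ n)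

lemma pow_mem_powIdeal (x : ι → R) (n : ℕ) (i : ι) : x i ^ n ∈ powIdeal x n :=
  Ideal.subset_span ⟨i, rfl⟩

lemma powIdeal_le_iff {x : ι → R} {n : ℕ} {I : Ideal R} :
    powIdeal x n ≤ I ↔ ∀ i, x i ^ n ∈ I := by
  rw [powIdeal, Ideal.span_le, Set.range_subset_iff]
  rfl

lemma powIdeal_fin_succ {r : ℕ} (x : Fin (r + 1) → R) (n : ℕ) :
    powIdeal x n = Ideal.span {x 0 ^ n} ⊔ powIdeal (fun i => x (Fin.succ i)) n := by
  rw [powIdeal, Fin.range_fin_succ, Ideal.span_insert]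
  rfl

lemma powIdeal_pow (x : ι → R) (n k : ℕ) : powIdeal (fun i => x i ^ n) k = powIdeal x (n * k) := by
  simp only [powIdeal, pow_mul]

variable {M : Type*} [AddCommGroup M] [Module R M] {m : M} {n : ℕ}

lemma mem_powIdeal_smul_top_of_unique [Unique ι] {x : ι → R} :
    m ∈ powIdeal x n • (⊤ : Submodule R M) ↔ ∃ m', m = x default ^ n • m' := by
  rw [powIdeal, Set.range_unique, Submodule.ideal_span_singleton_smul,
    Submodule.mem_smul_pointwise_iff_exists]
  simp [eq_comm]

lemma mem_powIdeal_fin_succ_smul_top {r : ℕ} {x : Fin (r + 1) → R} :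
    m ∈ powIdeal x n • (⊤ : Submodule R M) ↔
      ∃ m', ∃ q ∈ powIdeal (fun i => x (Fin.succ i)) n • (⊤ : Submodule R M),
        x 0 ^ n • m' + q = m := by
  rw [powIdeal_fin_succ, Submodule.sup_smul, Submodule.mem_sup, Submodule.ideal_span_singleton_smul]
  simp [Submodule.mem_smul_pointwise_iff_exists]

variable [Fintype ι] {x : ι → R}

lemma prod_pow_mul_mem_powIdeal {a : R} (k : ℕ) (ha : a ∈ powIdeal x n) :
    (∏ i, x i) ^ k * a ∈ powIdeal x (n + k) := by
  suffices powIdeal x n ≤ (powIdeal x (n + k)).colon {(∏ i, x i) ^ k} by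
    simpa [Submodule.mem_colon_singleton, mul_comm] using this ha
  refine powIdeal_le_iff.2 fun i => Submodule.mem_colon_singleton.2 ?_
  rw [smul_eq_mul]
  obtain ⟨c, hc⟩ := pow_dvd_pow_of_dvd (Finset.dvd_prod_of_mem x (Finset.mem_univ i)) k
  rw [hc, ← mul_assoc, ← pow_add]
  exact Ideal.mul_mem_right _ _ (pow_mem_powIdeal x _ i)

lemma prod_pow_smul_mem_powIdeal_smul_top (k : ℕ) (hm : m ∈ powIdeal x n • (⊤ : Submodule R M)) :
    (∏ i, x i) ^ k • m ∈ powIdeal x (n + k) • (⊤ : Submodule R M) := by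
  induction hm using Submodule.smul_induction_on' with
  | smul a ha m hm =>
    rw [smul_smul]
    exact Submodule.smul_mem_smul (prod_pow_mul_mem_powIdeal k ha) hm
  | add m _ m' _ hm hm' =>
    rw [smul_add]
    exact add_mem hm hm'

end PowIdeal

section PowerTorsion

variable {R : Type*} [CommRing R]

/-- The submodule `Γ_J(E)` of elements killed by some power of the ideal `J`. -/
def powTorsion (J : Ideal R) (E : Type*) [AddCommGroup E] [Module R E] : Submodule R E where
  carrier := {e | ∃ t : ℕ, ∀ a ∈ J ^ t, a • e = 0}
  zero_mem' := ⟨0, fun a _ => smul_zero a⟩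
  add_mem' := by
    rintro e f ⟨s, hs⟩ ⟨t, ht⟩
    refine ⟨s + t, fun a ha => ?_⟩
    rw [smul_add, hs a (Ideal.pow_le_pow_right (Nat.le_add_right s t) ha),
      ht a (Ideal.pow_le_pow_right (Nat.le_add_left t s) ha), add_zero]
  smul_mem' := by
    rintro c e ⟨t, ht⟩
    exact ⟨t, fun a ha => by rw [smul_comm, ht a ha, smul_zero]⟩

variable {J : Ideal R} {y : R} {E F : Type*} [AddCommGroup E] [Module R E]
  [AddCommGroup F] [Module R F]

lemma mem_powTorsion {e : E} : e ∈ powTorsion J E ↔ ∃ t : ℕ, ∀ a ∈ J ^ t, a • e = 0 := Iff.rfl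

lemma powTorsion_bot : powTorsion (⊥ : Ideal R) E = ⊤ :=
  eq_top_iff.2 fun e _ => ⟨1, by simp⟩

lemma map_mem_powTorsion (f : E →ₗ[R] F) {e : E} (he : e ∈ powTorsion J E) :
    f e ∈ powTorsion J F := by
  obtain ⟨t, ht⟩ := he
  exact ⟨t, fun a ha => by rw [← map_smul, ht a ha, map_zero]⟩

lemma mem_powTorsion_span_singleton {e : E} :
    e ∈ powTorsion (Ideal.span {y}) E ↔ ∃ t : ℕ, y ^ t • e = 0 := by
  simp only [mem_powTorsion, Ideal.span_singleton_pow, Ideal.mem_span_singleton',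
    forall_exists_index, forall_apply_eq_imp_iff, mul_smul]
  exact exists_congr fun t => ⟨fun h => by simpa using h 1, fun h a => by rw [h, smul_zero]⟩

lemma mem_powTorsion_of_pow_smul_mem {n : ℕ} {e : E}
    (he : y ^ n • e ∈ powTorsion (Ideal.span {y}) E) : e ∈ powTorsion (Ideal.span {y}) E := by
  rw [mem_powTorsion_span_singleton] at he ⊢
  obtain ⟨t, ht⟩ := he
  exact ⟨t + n, by rw [pow_add, mul_smul, ht]⟩

lemma powTorsion_sup (J K : Ideal R) :
    powTorsion (J ⊔ K) E = powTorsion J E ⊓ powTorsion K E := by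
  ext e
  constructor
  · rintro ⟨t, ht⟩
    exact ⟨⟨t, fun a ha => ht a (Ideal.pow_right_mono le_sup_left t ha)⟩,
      ⟨t, fun a ha => ht a (Ideal.pow_right_mono le_sup_right t ha)⟩⟩
  · rintro ⟨⟨s, hs⟩, ⟨t, ht⟩⟩
    refine ⟨s + t, fun a ha => ?_⟩
    obtain ⟨b, hb, c, hc, rfl⟩ := Submodule.mem_sup.1 (Ideal.sup_pow_add_le_pow_sup_pow ha)
    rw [add_smul, hs b hb, ht c hc, add_zero]

lemma exists_forall_pow_smul_eq_zero [IsNoetherian R E] (y : R) :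
    ∃ N : ℕ, ∀ e ∈ powTorsion (Ideal.span {y}) E, y ^ N • e = 0 := by
  obtain ⟨N, hN⟩ := ((Algebra.lsmul R R E y).eventually_iSup_ker_pow_eq).exists
  have hpow (k : ℕ) (e : E) : (Algebra.lsmul R R E y ^ k) e = y ^ k • e := by
    rw [← map_pow, Algebra.lsmul_coe]
  refine ⟨N, fun e he => ?_⟩
  obtain ⟨t, ht⟩ := mem_powTorsion_span_singleton.1 he
  have hmem : e ∈ ⨆ k, LinearMap.ker (Algebra.lsmul R R E y ^ k) :=
    Submodule.mem_iSup_of_mem t (by rwa [LinearMap.mem_ker, hpow])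
  rwa [hN, LinearMap.mem_ker, hpow] at hmem

/-- The powers `y ^ (n + N)` and `y ^ N` have the same kernel on `R ⧸ a` for large `N`, so that
`y ^ N • e` factors through `y ^ (n + N)`; injectivity then extends this factorization. -/
lemma exists_pow_smul_sub_mem_of_forall_smul_eq_zero {R : Type u} [CommRing R] [IsNoetherianRing R]
    {E : Type u} [AddCommGroup E] [Module R E] [Module.Injective R E] {a : Ideal R} (y : R) (n : ℕ)
    {e : E} (he : ∀ c ∈ a, c • e = 0) :
    ∃ w : E, (∀ c ∈ a, c • w = 0) ∧ y ^ n • w - e ∈ powTorsion (Ideal.span {y}) E := by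
  obtain ⟨N, hN⟩ := exists_forall_pow_smul_eq_zero (E := R ⧸ a) y
  let f : (R ⧸ a) →ₗ[R] (R ⧸ a) := LinearMap.lsmul R (R ⧸ a) (y ^ (n + N))
  let g : (R ⧸ a) →ₗ[R] E := Submodule.liftQ a (LinearMap.toSpanSingleton R E (y ^ N • e))
    fun c hc => by
      rw [LinearMap.mem_ker, LinearMap.toSpanSingleton_apply, smul_comm, he c hc, smul_zero]
  have hg (c : R) : g (Submodule.Quotient.mk c) = c • y ^ N • e := rfl
  have hker : LinearMap.ker f ≤ LinearMap.ker g := by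
    intro b hb
    have hb' : y ^ N • b = 0 := hN b (mem_powTorsion_span_singleton.2 ⟨n + N, hb⟩)
    obtain ⟨c, rfl⟩ := Submodule.Quotient.mk_surjective a b
    rw [← Submodule.Quotient.mk_smul, Submodule.Quotient.mk_eq_zero] at hb'
    rw [LinearMap.mem_ker, hg, ← he _ hb', smul_smul, smul_eq_mul, mul_comm]
  obtain ⟨h, hh⟩ := Module.Injective.out ((LinearMap.ker f).liftQ f le_rfl)
    (LinearMap.ker_eq_bot.1 (Submodule.ker_liftQ_eq_bot _ _ _ le_rfl))
    ((LinearMap.ker f).liftQ g hker)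
  have hfg : h (f (Submodule.Quotient.mk 1)) = y ^ N • e :=
    (hh (Submodule.Quotient.mk (Submodule.Quotient.mk 1))).trans ((hg 1).trans (one_smul R _))
  have hw : y ^ (n + N) • h (Submodule.Quotient.mk 1) = y ^ N • e := (map_smul h _ _).symm.trans hfg
  refine ⟨h (Submodule.Quotient.mk 1), fun c hc => ?_, mem_powTorsion_span_singleton.2 ⟨N, ?_⟩⟩
  · rw [← map_smul, ← Submodule.Quotient.mk_smul, smul_eq_mul, mul_one,
      (Submodule.Quotient.mk_eq_zero a).2 hc, map_zero]
  · rw [smul_sub, smul_smul, ← pow_add, add_comm, hw, sub_self]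

lemma exists_mem_powTorsion_pow_smul_sub_mem {R : Type u} [CommRing R] [IsNoetherianRing R]
    {E : Type u} [AddCommGroup E] [Module R E] [Module.Injective R E] {J : Ideal R} (y : R) (n : ℕ)
    {e : E} (he : e ∈ powTorsion J E) :
    ∃ w ∈ powTorsion J E, y ^ n • w - e ∈ powTorsion (Ideal.span {y}) E := by
  obtain ⟨t, ht⟩ := he
  obtain ⟨w, hw, hwe⟩ := exists_pow_smul_sub_mem_of_forall_smul_eq_zero y n ht
  exact ⟨w, ⟨t, hw⟩, hwe⟩

end PowerTorsion

section Dimension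

variable {A : Type*} [CommRing A]

lemma mk_mem_nonZeroDivisors_quotient_powTorsion (y : A) :
    Ideal.Quotient.mk (powTorsion (Ideal.span {y}) A) y ∈
      nonZeroDivisors (A ⧸ powTorsion (Ideal.span {y}) A) := by
  rw [mem_nonZeroDivisors_iff_right]
  intro b hb
  obtain ⟨a, rfl⟩ := Ideal.Quotient.mk_surjective b
  rw [← map_mul, Ideal.Quotient.eq_zero_iff_mem, mul_comm] at hb
  rw [Ideal.Quotient.eq_zero_iff_mem]
  exact mem_powTorsion_of_pow_smul_mem (n := 1) (by simpa using hb)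

lemma ringKrullDim_quotient_powTorsion_sup_succ_le (y : A) :
    ringKrullDim (A ⧸ (powTorsion (Ideal.span {y}) A ⊔ Ideal.span {y})) + 1 ≤ ringKrullDim A := by
  set K : Ideal A := powTorsion (Ideal.span {y}) A
  have e := DoubleQuot.quotQuotEquivQuotSup K (Ideal.span {y})
  rw [Ideal.map_span, Set.image_singleton] at e
  rw [← ringKrullDim_eq_of_ringEquiv e]
  exact (ringKrullDim_quotient_succ_le_of_nonZeroDivisor
    (mk_mem_nonZeroDivisors_quotient_powTorsion y)).trans (ringKrullDim_quotient_le K)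

lemma exists_prod_pow_mem_of_tail {d : ℕ} {x : Fin (d + 1) → A} {k : ℕ}
    (h : (∏ i, x (Fin.succ i)) ^ k ∈ powIdeal (fun i => x (Fin.succ i)) (k + 1) ⊔
      (powTorsion (Ideal.span {x 0}) A ⊔ Ideal.span {x 0})) :
    ∃ l, (∏ i, x i) ^ l ∈ powIdeal x (l + 1) := by
  obtain ⟨q, hq, b, hb, hqb⟩ := Submodule.mem_sup.1 h
  obtain ⟨t, ht, b', hb', rfl⟩ := Submodule.mem_sup.1 hb
  obtain ⟨c, rfl⟩ := Ideal.mem_span_singleton'.1 hb'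
  obtain ⟨N, hN⟩ := mem_powTorsion_span_singleton.1 ht
  set p := ∏ i, x (Fin.succ i) with hp
  refine ⟨k + N, ?_⟩
  have hpq : p ^ N * q ∈ powIdeal x (k + 1 + N) :=
    powIdeal_fin_succ x _ ▸ Ideal.mem_sup_right (prod_pow_mul_mem_powIdeal N hq)
  have hprod : (∏ i, x i) ^ (k + N) =
      x 0 ^ (k + N) * (p ^ N * q) + p ^ N * c * x 0 ^ (k + 1 + N) := by
    rw [smul_eq_mul] at hN
    rw [Fin.prod_univ_succ, ← hp, mul_pow, pow_add p, ← hqb]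
    linear_combination (x 0 ^ k * p ^ N) * hN
  rw [hprod, add_right_comm]
  exact add_mem (Ideal.mul_mem_left _ _ hpq) (Ideal.mul_mem_left _ _ (pow_mem_powIdeal x _ 0))

lemma exists_prod_pow_mem_sup_of_quotient {ι : Type*} [Fintype ι] (x : ι → A) (I : Ideal A)
    (h : ∃ k, (∏ i, Ideal.Quotient.mk I (x i)) ^ k ∈
      powIdeal (fun i => Ideal.Quotient.mk I (x i)) (k + 1)) :
    ∃ k, (∏ i, x i) ^ k ∈ powIdeal x (k + 1) ⊔ I := by
  obtain ⟨k, hk⟩ := h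
  refine ⟨k, ?_⟩
  rw [powIdeal, ← Ideal.mem_quotient_iff_mem_sup, Ideal.map_span, ← Set.range_comp]
  simpa only [powIdeal, map_pow, map_prod, Function.comp_def] using hk

theorem exists_prod_pow_mem_powIdeal {d : ℕ} (h : ringKrullDim A < d) (x : Fin d → A) :
    ∃ k, (∏ i, x i) ^ k ∈ powIdeal x (k + 1) := by
  induction d generalizing A with
  | zero =>
    have : Subsingleton A := by
      contrapose! h
      simpa using ringKrullDim_nonneg_of_nontrivial
    exact ⟨0, Subsingleton.elim 0 ((∏ i, x i) ^ 0) ▸ zero_mem _⟩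
  | succ d ih =>
    have hdim := (ringKrullDim_quotient_powTorsion_sup_succ_le (x 0)).trans_lt h
    push_cast at hdim
    obtain ⟨k, hk⟩ := exists_prod_pow_mem_sup_of_quotient (fun i => x (Fin.succ i)) _
      (ih (lt_of_add_lt_add_right hdim) _)
    exact exists_prod_pow_mem_of_tail hk

end Dimension

section PowerColimit

variable {R M H H' : Type*} [CommRing R] [AddCommGroup M] [Module R M]
  [AddCommGroup H'] [Module R H'] [AddCommGroup H] [Module R H]

/-- The maps `c n : M → H` induce an isomorphism onto `H` from the direct limit of the modules
`M ⧸ (x₁ⁿ, …, x_rⁿ)M` along the multiplications by `x₁⋯x_r`. -/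
structure IsPowerColimit {ι : Type*} [Fintype ι] (x : ι → R) (c : ℕ → M →ₗ[R] H) : Prop where
  compat (n k : ℕ) (m : M) : c (n + k) ((∏ i, x i) ^ k • m) = c n m
  surj (h : H) : ∃ n m, c n m = h
  eq_zero_iff (n : ℕ) (m : M) :
    c n m = 0 ↔ ∃ k, (∏ i, x i) ^ k • m ∈ powIdeal x (n + k) • (⊤ : Submodule R M)

namespace IsPowerColimit

section

variable {ι : Type*} [Fintype ι] {x : ι → R} {c : ℕ → M →ₗ[R] H}

lemma compLinearEquiv (hc : IsPowerColimit x c) (e : H ≃ₗ[R] H') :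
    IsPowerColimit x fun n => e.toLinearMap ∘ₗ c n where
  compat n k m := congrArg e (hc.compat n k m)
  surj h := by
    obtain ⟨n, m, hm⟩ := hc.surj (e.symm h)
    exact ⟨n, m, by simp [hm]⟩
  eq_zero_iff n m := by simp [← hc.eq_zero_iff]

lemma exists_apply_add_eq (hc : IsPowerColimit x c) (h : H) (n : ℕ) : ∃ l m, c (n + l) m = h := by
  obtain ⟨l, m, rfl⟩ := hc.surj h
  exact ⟨l, (∏ i, x i) ^ n • m, by rw [add_comm, hc.compat]⟩

lemma apply_eq_zero (hc : IsPowerColimit x c) {n : ℕ} {m : M}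
    (hm : m ∈ powIdeal x n • (⊤ : Submodule R M)) : c n m = 0 :=
  (hc.eq_zero_iff n m).2 ⟨0, by simpa using hm⟩

lemma subsingleton_of_moduleDim_lt {d : ℕ} {x : Fin d → R} {c : ℕ → M →ₗ[R] H}
    (hc : IsPowerColimit x c) (h : moduleDim R H < d) : Subsingleton H := by
  refine subsingleton_of_forall_eq 0 fun h₀ => ?_
  obtain ⟨n, m, rfl⟩ := hc.surj h₀
  let a := Module.annihilator R H
  obtain ⟨k, hk⟩ := exists_prod_pow_mem_sup_of_quotient (fun i => x i ^ n) a
    (exists_prod_pow_mem_powIdeal h _)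
  obtain ⟨q, hq, b, hb, hqb⟩ := Submodule.mem_sup.1 hk
  have hq' : q • m ∈ powIdeal x (n + n * k) • (⊤ : Submodule R M) := by
    refine Submodule.smul_mem_smul ?_ trivial
    rwa [powIdeal_pow, mul_add_one, add_comm] at hq
  calc c n m = c (n + n * k) ((q + b) • m) := by
        rw [hqb, Finset.prod_pow, ← pow_mul, hc.compat]
    _ = b • c (n + n * k) m := by rw [add_smul, map_add, hc.apply_eq_zero hq', zero_add, map_smul]
    _ = 0 := Module.mem_annihilator.1 hb _

end

lemma comp {r : ℕ} {x : Fin (r + 1) → R} {c : ℕ → M →ₗ[R] H} {δ : ℕ → H →ₗ[R] H'}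
    (hc : IsPowerColimit (fun i => x (Fin.succ i)) c)
    (hδ : IsPowerColimit (fun _ : Unit => x 0) δ) : IsPowerColimit x fun n => δ n ∘ₗ c n where
  compat n k m := by
    have := hδ.compat n k (c n m)
    rw [Fintype.prod_unique] at this
    rw [LinearMap.comp_apply, LinearMap.comp_apply, ← this, ← hc.compat n k m, Fin.prod_univ_succ,
      mul_pow, mul_smul, map_smul]
  surj h := by
    obtain ⟨n, h, rfl⟩ := hδ.surj h
    obtain ⟨l, m, rfl⟩ := hc.exists_apply_add_eq h n
    refine ⟨n + l, x 0 ^ l • m, ?_⟩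
    have := hδ.compat n l (c (n + l) m)
    rwa [Fintype.prod_unique, ← map_smul] at this
  eq_zero_iff n m := by
    simp only [LinearMap.comp_apply, hδ.eq_zero_iff, Fintype.prod_unique,
      mem_powIdeal_smul_top_of_unique, mem_powIdeal_fin_succ_smul_top, Fin.prod_univ_succ, mul_pow,
      mul_smul]
    set p := ∏ i, x (Fin.succ i)
    constructor
    · rintro ⟨k, h, hh⟩
      obtain ⟨l, m', rfl⟩ := hc.exists_apply_add_eq h n
      have hzero : c (n + l) (x 0 ^ k • p ^ l • m - x 0 ^ (n + k) • m') = 0 := by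
        rw [map_sub, map_smul, hc.compat, map_smul, hh, sub_self]
      obtain ⟨j, hj⟩ := (hc.eq_zero_iff _ _).1 hzero
      set q := x 0 ^ k • p ^ l • m - x 0 ^ (n + k) • m' with hq
      have hmem : x 0 ^ (l + j) • p ^ k • p ^ j • q ∈
          powIdeal (fun i => x (Fin.succ i)) (n + (k + l + j)) • (⊤ : Submodule R M) := by
        rw [show n + (k + l + j) = n + l + j + k by ring]
        exact Submodule.smul_mem _ _ (prod_pow_smul_mem_powIdeal_smul_top k hj)
      refine ⟨k + l + j, p ^ (k + j) • m', _, hmem, ?_⟩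
      rw [hq]
      module
    · rintro ⟨k, m', q, hq, h⟩
      refine ⟨k, c (n + k) m', ?_⟩
      rw [← hc.compat n k m, ← map_smul, ← map_smul, ← h, map_add, hc.apply_eq_zero hq, add_zero]

end IsPowerColimit

lemma moduleDim_lt_of_subsingleton [Subsingleton M] (d : ℕ) : moduleDim R M < d := by
  have : Subsingleton (R ⧸ Module.annihilator R M) :=
    Ideal.Quotient.subsingleton_iff.2 (Module.annihilator_eq_top_iff.2 ‹_›)
  rw [moduleDim, ringKrullDim_eq_bot_of_subsingleton]
  exact WithBot.bot_lt_coe _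

section LimitClosure

variable {d : ℕ} {x : Fin d → R} {m : M}

lemma mem_limitClosure_iff :
    m ∈ limitClosure x ↔
      ∃ k, (∏ i, x i) ^ (k + 1) • m ∈ powIdeal x (k + 2) • (⊤ : Submodule R M) := by
  refine Submodule.mem_iSup_of_directed _ (Monotone.directed_le fun k l hkl m hm => ?_)
  obtain ⟨j, rfl⟩ := Nat.exists_eq_add_of_le hkl
  have := prod_pow_smul_mem_powIdeal_smul_top j hm
  rwa [LinearMap.lsmul_apply, smul_smul, ← pow_add, add_comm j, add_right_comm k 1,
    add_right_comm k 2] at this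

lemma mem_limitClosure_pow_iff {n : ℕ} :
    m ∈ limitClosure (fun i => x i ^ (n + 1)) ↔
      ∃ k, (∏ i, x i) ^ k • m ∈ powIdeal x (n + 1 + k) • (⊤ : Submodule R M) := by
  have hexp (k : ℕ) : (n + 1) * (k + 2) = n + 1 + (n + 1) * (k + 1) := by ring
  simp only [mem_limitClosure_iff, powIdeal_pow, Finset.prod_pow, ← pow_mul, hexp]
  refine ⟨fun ⟨k, hk⟩ => ⟨_, hk⟩, fun ⟨k, hk⟩ => ⟨k, ?_⟩⟩
  obtain ⟨l, hl⟩ := Nat.exists_eq_add_of_le (show k ≤ (n + 1) * (k + 1) by nlinarith)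
  rw [hl, add_comm k l, pow_add, mul_smul, add_comm l k, ← add_assoc]
  exact prod_pow_smul_mem_powIdeal_smul_top l hk

end LimitClosure

namespace IsPowerColimit

lemma subsingleton_iff {d : ℕ} {x : Fin d → R} {c : ℕ → M →ₗ[R] H}
    (hc : IsPowerColimit x c) :
    Subsingleton H ↔ (⨅ n : ℕ, limitClosure (M := M) fun i => x i ^ (n + 1)) = ⊤ := by
  have hiff : (⨅ n : ℕ, limitClosure (M := M) fun i => x i ^ (n + 1)) = ⊤ ↔
      ∀ n, ∀ m : M, c (n + 1) m = 0 := by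
    simp only [iInf_eq_top, Submodule.eq_top_iff', mem_limitClosure_pow_iff, hc.eq_zero_iff]
  refine Iff.trans ⟨fun _ n m => Subsingleton.elim _ _, fun h => ?_⟩ hiff.symm
  refine subsingleton_of_forall_eq 0 fun h₀ => ?_
  obtain ⟨l, m, rfl⟩ := hc.exists_apply_add_eq h₀ 1
  exact add_comm l 1 ▸ h l m

end IsPowerColimit

end PowerColimit

section LiftOfSurjective

variable {R M N P : Type*} [CommRing R] [AddCommGroup M] [Module R M] [AddCommGroup N] [Module R N]
  [AddCommGroup P] [Module R P] (p : M →ₗ[R] N) (hp : Function.Surjective p) (q : M →ₗ[R] P)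
  (h : LinearMap.ker p ≤ LinearMap.ker q)

lemma quotKerEquivOfSurjective_symm_apply (m : M) :
    (p.quotKerEquivOfSurjective hp).symm (p m) = (LinearMap.ker p).mkQ m :=
  (p.quotKerEquivOfSurjective hp).symm_apply_eq.2 (p.quotKerEquivOfSurjective_apply_mk hp m).symm

/-- The linear map `f` with `f ∘ p = q`, for `p` surjective with kernel contained in that of
`q`. -/
noncomputable def liftOfSurjective : N →ₗ[R] P :=
  (LinearMap.ker p).liftQ q h ∘ₗ (p.quotKerEquivOfSurjective hp).symm.toLinearMap

lemma liftOfSurjective_apply (m : M) : liftOfSurjective p hp q h (p m) = q m := by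
  rw [liftOfSurjective, LinearMap.comp_apply, LinearEquiv.coe_coe,
    quotKerEquivOfSurjective_symm_apply]
  rfl

variable {q} (hq : Function.Surjective q) (hker : LinearMap.ker p = LinearMap.ker q)

/-- The isomorphism `f` with `f ∘ p = q`, for `p` and `q` surjective with the same kernel. -/
noncomputable def equivOfKerEq : N ≃ₗ[R] P :=
  (p.quotKerEquivOfSurjective hp).symm ≪≫ₗ Submodule.quotEquivOfEq _ _ hker ≪≫ₗ
    q.quotKerEquivOfSurjective hq

lemma equivOfKerEq_apply (m : M) : equivOfKerEq p hp hq hker (p m) = q m := by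
  rw [equivOfKerEq, LinearEquiv.trans_apply, LinearEquiv.trans_apply,
    quotKerEquivOfSurjective_symm_apply, Submodule.mkQ_apply, Submodule.quotEquivOfEq_mk,
    q.quotKerEquivOfSurjective_apply_mk]

end LiftOfSurjective

section TorsionCohomology

open CategoryTheory

variable {R : Type u} [CommRing R]

section

variable (J : Ideal R) (K : CochainComplex (ModuleCat.{u} R) ℕ) (n : ℕ)

/-- The `n`-cocycles of the complex `Γ_J(K)`. -/
def torsionCocycles : Submodule R (K.X n) :=
  powTorsion J (K.X n) ⊓ LinearMap.ker (K.d n (n + 1)).hom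

/-- The `n`-coboundaries of the complex `Γ_J(K)`. For `n = 0` this is `⊥`, as `K.d (0 - 1) 0` is
the differential `K.d 0 0 = 0`. -/
def torsionBoundaries : Submodule R (K.X n) :=
  (powTorsion J (K.X (n - 1))).map (K.d (n - 1) n).hom

/-- The `n`-th cohomology module of the complex `Γ_J(K)`. -/
abbrev torsionCohomology : Type u :=
  torsionCocycles J K n ⧸ (torsionBoundaries J K n).submoduleOf (torsionCocycles J K n)

/-- The class in the cohomology of `Γ_J(K)` of a cocycle. -/
def torsionClass : torsionCocycles J K n →ₗ[R] torsionCohomology J K n :=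
  Submodule.mkQ _

end

variable {J : Ideal R} {K : CochainComplex (ModuleCat.{u} R) ℕ} {n : ℕ}

lemma d_hom_d_hom {i j k : ℕ} (w : K.X i) : (K.d j k).hom ((K.d i j).hom w) = 0 := by
  rw [← LinearMap.comp_apply, ← ModuleCat.hom_comp, K.d_comp_d]
  rfl

lemma mem_torsionCocycles {z : K.X n} :
    z ∈ torsionCocycles J K n ↔ z ∈ powTorsion J (K.X n) ∧ (K.d n (n + 1)).hom z = 0 :=
  Iff.rfl

lemma torsionClass_surjective : Function.Surjective (torsionClass J K n) :=
  Submodule.mkQ_surjective _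

lemma torsionClass_eq_zero_iff {z : torsionCocycles J K n} :
    torsionClass J K n z = 0 ↔ (z : K.X n) ∈ torsionBoundaries J K n :=
  Submodule.Quotient.mk_eq_zero _

lemma torsionClass_eq_iff {z z' : torsionCocycles J K n} :
    torsionClass J K n z = torsionClass J K n z' ↔ (z - z' : K.X n) ∈ torsionBoundaries J K n :=
  Submodule.Quotient.eq _

lemma mem_torsionBoundaries_succ {z : K.X (n + 1)} :
    z ∈ torsionBoundaries J K (n + 1) ↔ ∃ w ∈ powTorsion J (K.X n), (K.d n (n + 1)).hom w = z :=
  Iff.rfl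

section Vanishing

variable [IsNoetherianRing R] [∀ i, Module.Injective R (K.X i)]

lemma torsionCocycles_sup_le_torsionBoundaries (y : R)
    (h₁ : torsionCocycles J K (n + 1) ≤ torsionBoundaries J K (n + 1))
    (h₂ : torsionCocycles J K (n + 2) ≤ torsionBoundaries J K (n + 2)) :
    torsionCocycles (J ⊔ Ideal.span {y}) K (n + 2) ≤
      torsionBoundaries (J ⊔ Ideal.span {y}) K (n + 2) := by
  rintro z ⟨hz, hdz⟩
  rw [powTorsion_sup] at hz
  obtain ⟨w, hw, rfl⟩ := mem_torsionBoundaries_succ.1 (h₂ ⟨hz.1, hdz⟩)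
  obtain ⟨N, hN⟩ := mem_powTorsion_span_singleton.1 hz.2
  obtain ⟨u, hu, hdu⟩ := mem_torsionBoundaries_succ.1
    (h₁ ⟨Submodule.smul_mem _ (y ^ N) hw, (map_smul _ _ _).trans hN⟩)
  obtain ⟨v, hv, hvu⟩ := exists_mem_powTorsion_pow_smul_sub_mem y N hu
  rw [mem_torsionBoundaries_succ, powTorsion_sup]
  refine ⟨w - (K.d n (n + 1)).hom v, ⟨sub_mem hw (map_mem_powTorsion _ hv),
    mem_powTorsion_of_pow_smul_mem (n := N) ?_⟩, by rw [map_sub, d_hom_d_hom, sub_zero]⟩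
  have := neg_mem (map_mem_powTorsion (K.d n (n + 1)).hom hvu)
  rwa [map_sub, map_smul, neg_sub, hdu, ← smul_sub] at this

/-- Each additional generator of `J` moves the vanishing range up by one. -/
lemma torsionCocycles_le_torsionBoundaries
    (hK : ∀ i, Function.Exact (K.d i (i + 1)).hom (K.d (i + 1) (i + 2)).hom) {r : ℕ}
    (x : Fin r → R) {j : ℕ} (hj : r ≤ j) :
    torsionCocycles (Ideal.span (Set.range x)) K (j + 1) ≤
      torsionBoundaries (Ideal.span (Set.range x)) K (j + 1) := by
  induction r generalizing j with
  | zero =>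
    rw [Set.range_eq_empty, Ideal.span_empty]
    intro z hz
    obtain ⟨w, rfl⟩ := (hK j z).1 (mem_torsionCocycles.1 hz).2
    exact mem_torsionBoundaries_succ.2 ⟨w, by rw [powTorsion_bot]; trivial, rfl⟩
  | succ r ih =>
    obtain _ | i := j
    · omega
    rw [Fin.range_fin_succ, Ideal.span_insert, sup_comm]
    exact torsionCocycles_sup_le_torsionBoundaries (x 0) (ih _ (by omega)) (ih _ (by omega))

end Vanishing

section Connecting

variable (J K n) in
/-- The pairs `(w, z)` of a `J`-torsion element `w` and a cocycle `z` of `Γ_J(K)` such that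
`w = z / yᵏ` after localization at `y`. -/
def divisionPairs (y : R) (k : ℕ) : Submodule R (powTorsion J (K.X n) × torsionCocycles J K n) :=
  (powTorsion (Ideal.span {y}) (K.X n)).comap
    (y ^ k • (powTorsion J (K.X n)).subtype.comp (LinearMap.fst R _ _) -
      (torsionCocycles J K n).subtype.comp (LinearMap.snd R _ _))

variable {y : R} {k : ℕ} {w : powTorsion J (K.X n)} {z : torsionCocycles J K n}

lemma mem_divisionPairs :
    (w, z) ∈ divisionPairs J K n y k ↔
      y ^ k • (w : K.X n) - z ∈ powTorsion (Ideal.span {y}) (K.X n) :=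
  Iff.rfl

lemma d_mem_torsionCocycles_of_mem_divisionPairs (h : (w, z) ∈ divisionPairs J K n y k) :
    (K.d n (n + 1)).hom w ∈ torsionCocycles (J ⊔ Ideal.span {y}) K (n + 1) := by
  refine ⟨?_, d_hom_d_hom _⟩
  rw [powTorsion_sup]
  refine ⟨map_mem_powTorsion _ w.2, mem_powTorsion_of_pow_smul_mem (n := k) ?_⟩
  have := map_mem_powTorsion (K.d n (n + 1)).hom (mem_divisionPairs.1 h)
  rwa [map_sub, LinearMap.mem_ker.1 z.2.2, sub_zero, map_smul] at this

variable [IsNoetherianRing R] [∀ i, Module.Injective R (K.X i)]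

lemma exists_mem_divisionPairs (y : R) (k : ℕ) (z : torsionCocycles J K n) :
    ∃ w, (w, z) ∈ divisionPairs J K n y k := by
  obtain ⟨w, hw, hwz⟩ := exists_mem_powTorsion_pow_smul_sub_mem y k z.2.1
  exact ⟨⟨w, hw⟩, hwz⟩

lemma d_mem_torsionBoundaries_of_pow_smul_sub_mem (h : (w, z) ∈ divisionPairs J K n y k) {l : ℕ}
    {c : torsionCocycles J K n} (hc : (y ^ l • z - y ^ (k + l) • c : K.X n) ∈
      torsionBoundaries J K n) :
    (K.d n (n + 1)).hom w ∈ torsionBoundaries (J ⊔ Ideal.span {y}) K (n + 1) := by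
  obtain ⟨b', hb', hdb'⟩ := hc
  obtain ⟨b, hb, hbb'⟩ := exists_mem_powTorsion_pow_smul_sub_mem y (k + l) hb'
  set d := (K.d (n - 1) n).hom
  rw [mem_torsionBoundaries_succ, powTorsion_sup]
  refine ⟨w - c - d b, ⟨sub_mem (sub_mem w.2 c.2.1) (map_mem_powTorsion _ hb),
    mem_powTorsion_of_pow_smul_mem (n := k + l) ?_⟩, ?_⟩
  · have hdiv : y ^ (k + l) • (w - c - d b : K.X n) =
        y ^ l • (y ^ k • (w : K.X n) - z) - d (y ^ (k + l) • b - b') := by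
      rw [map_sub, map_smul, hdb']
      module
    rw [hdiv]
    exact sub_mem (Submodule.smul_mem _ _ h) (map_mem_powTorsion _ hbb')
  · rw [map_sub, map_sub, (mem_torsionCocycles.1 c.2).2, d_hom_d_hom, sub_zero, sub_zero]

lemma d_mem_torsionBoundaries_iff (h : (w, z) ∈ divisionPairs J K n y k) :
    (K.d n (n + 1)).hom w ∈ torsionBoundaries (J ⊔ Ideal.span {y}) K (n + 1) ↔
      ∃ (l : ℕ) (c : torsionCocycles J K n),
        (y ^ l • z - y ^ (k + l) • c : K.X n) ∈ torsionBoundaries J K n := by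
  refine ⟨fun hw => ?_, fun ⟨l, c, hc⟩ => d_mem_torsionBoundaries_of_pow_smul_sub_mem h hc⟩
  obtain ⟨g, hg, hdg⟩ := mem_torsionBoundaries_succ.1 hw
  rw [powTorsion_sup] at hg
  have hc : (w - g : K.X n) ∈ torsionCocycles J K n :=
    mem_torsionCocycles.2 ⟨sub_mem w.2 hg.1, by rw [map_sub, hdg, sub_self]⟩
  obtain ⟨l, hl⟩ := mem_powTorsion_span_singleton.1
    (sub_mem (mem_divisionPairs.1 h) (Submodule.smul_mem _ (y ^ k) hg.2))
  refine ⟨l, ⟨_, hc⟩, ?_⟩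
  have hzero : (y ^ l • z - y ^ (k + l) • (w - g) : K.X n) = 0 := by
    linear_combination (norm := module) -hl
  rw [hzero]
  exact zero_mem _

variable (J K n y k) in
/-- The map `[z] ↦ ∂[z / yᵏ]`, where `∂` is the connecting map of the exact sequence
`0 → Γ_{(J, y)}(K) → Γ_J(K) → Γ_J(K)_y → 0`. Concretely, `[z]` goes to `[d w]` for any pair
`(w, z)` in `divisionPairs J K n y k`. -/
noncomputable def connectingMap :
    torsionCohomology J K n →ₗ[R] torsionCohomology (J ⊔ Ideal.span {y}) K (n + 1) :=
  liftOfSurjective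
    ((torsionClass J K n).comp
      ((LinearMap.snd R _ _).comp (divisionPairs J K n y k).subtype))
    (fun h => by
      obtain ⟨z, rfl⟩ := torsionClass_surjective h
      obtain ⟨w, hw⟩ := exists_mem_divisionPairs y k z
      exact ⟨⟨_, hw⟩, rfl⟩)
    ((torsionClass (J ⊔ Ideal.span {y}) K (n + 1)).comp
      (((K.d n (n + 1)).hom.comp ((powTorsion J (K.X n)).subtype.comp
        ((LinearMap.fst R _ _).comp (divisionPairs J K n y k).subtype))).codRestrict _
          fun p => d_mem_torsionCocycles_of_mem_divisionPairs p.2))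
    (by
      rintro ⟨⟨w, z⟩, h⟩ hz
      refine torsionClass_eq_zero_iff.2 ((d_mem_torsionBoundaries_iff h).2 ⟨0, 0, ?_⟩)
      simpa using torsionClass_eq_zero_iff.1 hz)

lemma connectingMap_torsionClass (h : (w, z) ∈ divisionPairs J K n y k) :
    connectingMap J K n y k (torsionClass J K n z) =
      torsionClass (J ⊔ Ideal.span {y}) K (n + 1)
        ⟨_, d_mem_torsionCocycles_of_mem_divisionPairs h⟩ :=
  liftOfSurjective_apply _ _ _ _ (⟨(w, z), h⟩ : divisionPairs J K n y k)

lemma isPowerColimit_connectingMap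
    (hJ : torsionCocycles J K (n + 1) ≤ torsionBoundaries J K (n + 1)) :
    IsPowerColimit (fun _ : Unit => y) fun k => connectingMap J K n y k where
  compat k l h := by
    obtain ⟨z, rfl⟩ := torsionClass_surjective h
    obtain ⟨w, hw⟩ := exists_mem_divisionPairs y k z
    have hlw : (w, y ^ l • z) ∈ divisionPairs J K n y (k + l) := by
      have := Submodule.smul_mem _ (y ^ l) (mem_divisionPairs.1 hw)
      rwa [smul_sub, smul_smul, ← pow_add, add_comm l] at this
    rw [Fintype.prod_unique, ← map_smul (torsionClass J K n), connectingMap_torsionClass hw,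
      connectingMap_torsionClass hlw]
  surj h := by
    obtain ⟨⟨z, hz⟩, rfl⟩ := torsionClass_surjective h
    have hz' := hz.1
    rw [powTorsion_sup] at hz'
    obtain ⟨w, hw, rfl⟩ := mem_torsionBoundaries_succ.1 (hJ ⟨hz'.1, hz.2⟩)
    obtain ⟨N, hN⟩ := mem_powTorsion_span_singleton.1 hz'.2
    have hNw : y ^ N • w ∈ torsionCocycles J K n :=
      ⟨Submodule.smul_mem _ _ hw, (map_smul _ _ _).trans hN⟩
    refine ⟨N, torsionClass J K n ⟨_, hNw⟩, ?_⟩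
    exact connectingMap_torsionClass (w := ⟨w, hw⟩) (mem_divisionPairs.2 (by simp))
  eq_zero_iff k h := by
    obtain ⟨z, rfl⟩ := torsionClass_surjective h
    obtain ⟨w, hw⟩ := exists_mem_divisionPairs y k z
    simp only [connectingMap_torsionClass hw, torsionClass_eq_zero_iff,
      d_mem_torsionBoundaries_iff hw, Fintype.prod_unique, mem_powIdeal_smul_top_of_unique,
      torsionClass_surjective.exists, ← map_smul, torsionClass_eq_iff]
    rfl

end Connecting

section Resolution

variable {M : Type*} [AddCommGroup M] [Module R M] {ι : M →ₗ[R] K.X 0}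

lemma torsionBoundaries_zero : torsionBoundaries J K 0 = ⊥ := by
  rw [torsionBoundaries, K.shape _ _ (by simp), ModuleCat.hom_zero, Submodule.map_zero]

lemma exists_isPowerColimit_torsionCohomology_zero (hι : Function.Injective ι)
    (hιd : Function.Exact ι (K.d 0 1).hom) (x : Fin 0 → R) :
    ∃ c : ℕ → M →ₗ[R] torsionCohomology (Ideal.span (Set.range x)) K 0, IsPowerColimit x c := by
  have hJ : Ideal.span (Set.range x) = ⊥ := by rw [Set.range_eq_empty, Ideal.span_empty]
  have hmem (m : M) : ι m ∈ torsionCocycles (Ideal.span (Set.range x)) K 0 := by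
    rw [mem_torsionCocycles, hJ, powTorsion_bot]
    exact ⟨trivial, hιd.apply_apply_eq_zero m⟩
  have hpow (n : ℕ) : powIdeal x n = ⊥ := by rw [powIdeal, Set.range_eq_empty, Ideal.span_empty]
  refine ⟨fun _ => (torsionClass _ K 0).comp (ι.codRestrict _ hmem), fun n k m => ?_, fun h => ?_,
    fun n m => ?_⟩
  · rw [Finset.univ_eq_empty, Finset.prod_empty, one_pow, one_smul]
  · obtain ⟨z, rfl⟩ := torsionClass_surjective h
    obtain ⟨m, hm⟩ := (hιd z).1 (mem_torsionCocycles.1 z.2).2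
    exact ⟨0, m, congrArg _ (Subtype.ext hm)⟩
  · simp [torsionClass_eq_zero_iff, torsionBoundaries_zero, hpow, map_eq_zero_iff ι hι]

variable [IsNoetherianRing R] [∀ i, Module.Injective R (K.X i)]

theorem exists_isPowerColimit_torsionCohomology
    (hK : ∀ i, Function.Exact (K.d i (i + 1)).hom (K.d (i + 1) (i + 2)).hom)
    (hι : Function.Injective ι) (hιd : Function.Exact ι (K.d 0 1).hom) {r : ℕ} (x : Fin r → R) :
    ∃ c : ℕ → M →ₗ[R] torsionCohomology (Ideal.span (Set.range x)) K r, IsPowerColimit x c := by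
  induction r with
  | zero => exact exists_isPowerColimit_torsionCohomology_zero hι hιd x
  | succ r ih =>
    obtain ⟨c, hc⟩ := ih fun i => x i.succ
    rw [Fin.range_fin_succ, Ideal.span_insert, sup_comm]
    exact ⟨_, hc.comp (isPowerColimit_connectingMap
      (torsionCocycles_le_torsionBoundaries hK (fun i => x i.succ) le_rfl))⟩

end Resolution

end TorsionCohomology

section CocycleClass

open CategoryTheory

variable {R : Type u} [CommRing R]

section

variable (K : CochainComplex (ModuleCat.{u} R) ℕ) (n : ℕ)

/-- The elements of the kernel of the differential, as elements of the categorical object of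
cycles. -/
noncomputable def kerToCycles : LinearMap.ker (K.d n (n + 1)).hom →ₗ[R] K.cycles n :=
  (K.liftCycles (ModuleCat.ofHom (LinearMap.ker (K.d n (n + 1)).hom).subtype) (n + 1)
    (by simp) (by ext z; exact z.2)).hom

/-- The cohomology class of a cocycle of a complex of modules. -/
noncomputable def cocycleClass : LinearMap.ker (K.d n (n + 1)).hom →ₗ[R] K.homology n :=
  (K.homologyπ n).hom ∘ₗ kerToCycles K n

end

variable {K L : CochainComplex (ModuleCat.{u} R) ℕ} {n : ℕ}

lemma iCycles_kerToCycles (z : LinearMap.ker (K.d n (n + 1)).hom) :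
    (K.iCycles n).hom (kerToCycles K n z) = z := by
  rw [kerToCycles, ← LinearMap.comp_apply, ← ModuleCat.hom_comp, K.liftCycles_i]
  rfl

lemma iCycles_hom_injective : Function.Injective (K.iCycles n).hom :=
  (ModuleCat.mono_iff_injective _).1 inferInstance

lemma cocycleClass_surjective : Function.Surjective (cocycleClass K n) := by
  intro h
  obtain ⟨c, rfl⟩ := (ModuleCat.epi_iff_surjective (K.homologyπ n)).1 inferInstance h
  have hc : (K.d n (n + 1)).hom ((K.iCycles n).hom c) = 0 := by
    rw [← LinearMap.comp_apply, ← ModuleCat.hom_comp, K.iCycles_d]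
    rfl
  exact ⟨⟨_, hc⟩, congrArg (K.homologyπ n).hom (iCycles_hom_injective (iCycles_kerToCycles _))⟩

lemma cocycleClass_eq_zero_iff {z : LinearMap.ker (K.d n (n + 1)).hom} :
    cocycleClass K n z = 0 ↔ ∃ w, (K.d (n - 1) n).hom w = z := by
  have hprev : (ComplexShape.up ℕ).prev n = n - 1 := by cases n <;> simp
  have hexact : Function.Exact (K.toCycles (n - 1) n).hom (K.homologyπ n).hom :=
    (ShortComplex.ShortExact.moduleCat_exact_iff_function_exact
      (ShortComplex.mk _ _ (K.toCycles_comp_homologyπ _ _))).1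
      (ShortComplex.exact_of_g_is_cokernel _ (K.homologyIsCokernel (n - 1) n hprev))
  refine (hexact _).trans (exists_congr fun w => ?_)
  rw [← iCycles_hom_injective.eq_iff, iCycles_kerToCycles, ← LinearMap.comp_apply,
    ← ModuleCat.hom_comp, K.toCycles_i]

lemma homologyMap_cocycleClass (φ : K ⟶ L) {z : LinearMap.ker (K.d n (n + 1)).hom}
    {w : LinearMap.ker (L.d n (n + 1)).hom} (h : (φ.f n).hom z = w) :
    (HomologicalComplex.homologyMap φ n).hom (cocycleClass K n z) = cocycleClass L n w := by
  have hcycles : (HomologicalComplex.cyclesMap φ n).hom (kerToCycles K n z) =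
      kerToCycles L n w := by
    rw [← iCycles_hom_injective.eq_iff, iCycles_kerToCycles, ← LinearMap.comp_apply,
      ← ModuleCat.hom_comp, HomologicalComplex.cyclesMap_i, ModuleCat.hom_comp,
      LinearMap.comp_apply, iCycles_kerToCycles, h]
  rw [cocycleClass, cocycleClass, LinearMap.comp_apply, LinearMap.comp_apply, ← hcycles,
    ← LinearMap.comp_apply, ← ModuleCat.hom_comp, HomologicalComplex.homologyπ_naturality]
  rfl

end CocycleClass

section ExtComparison

open CategoryTheory Opposite

variable {R : Type u} [CommRing R] {X X' Y : ModuleCat.{u} R}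

section Projective

variable (P : ProjectiveResolution X)

/-- The `n`-cocycles of the complex `Hom(P, Y)`, for a projective resolution `P`. -/
def projectiveCocycles (Y : ModuleCat.{u} R) (n : ℕ) : Submodule R (P.complex.X n ⟶ Y) :=
  LinearMap.ker (Linear.leftComp R Y (P.complex.d (n + 1) n))

/-- The class in the derived functor `Ext` of a cocycle on a projective resolution. -/
noncomputable def derivedExtClass (Y : ModuleCat.{u} R) (n : ℕ) :
    projectiveCocycles P Y n →ₗ[R] ((Ext R (ModuleCat.{u} R) n).obj (op X)).obj Y :=
  (P.isoExt (R := R) n Y).inv.hom ∘ₗ cocycleClass (P.complex.linearYonedaObj R Y) n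

variable {P} {n : ℕ}

lemma mem_projectiveCocycles {f : P.complex.X n ⟶ Y} :
    f ∈ projectiveCocycles P Y n ↔ P.complex.d (n + 1) n ≫ f = 0 :=
  Iff.rfl

lemma derivedExtClass_surjective : Function.Surjective (derivedExtClass P Y n) :=
  ((ModuleCat.epi_iff_surjective (P.isoExt (R := R) n Y).inv).1 inferInstance).comp
    cocycleClass_surjective

lemma derivedExtClass_eq_zero_iff {f : projectiveCocycles P Y n} :
    derivedExtClass P Y n f = 0 ↔ ∃ g, P.complex.d n (n - 1) ≫ g = f.1 :=
  (map_eq_zero_iff (P.isoExt (R := R) n Y).inv.hom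
    ((ModuleCat.mono_iff_injective _).1 inferInstance)).trans cocycleClass_eq_zero_iff

/-- The morphism `Hom(D, Y) ⟶ Hom(C, Y)` given by precomposition with `φ : C ⟶ D`. -/
noncomputable def linearYonedaMap {C D : ChainComplex (ModuleCat.{u} R) ℕ} (φ : C ⟶ D)
    (Y : ModuleCat.{u} R) : D.linearYonedaObj R Y ⟶ C.linearYonedaObj R Y :=
  (HomologicalComplex.unopFunctor _ _).map
    ((((linearYoneda R (ModuleCat.{u} R)).obj Y).rightOp.mapHomologicalComplex _).map φ).op

lemma isoExt_inv_naturality {q : X' ⟶ X} {P' : ProjectiveResolution X'}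
    (φ : ProjectiveResolution.Hom P' P q) :
    (P.isoExt (R := R) n Y).inv ≫ ((Ext R (ModuleCat.{u} R) n).map q.op).app Y =
      HomologicalComplex.homologyMap (linearYonedaMap φ.hom Y) n ≫
        (P'.isoExt (R := R) n Y).inv := by
  let F := ((linearYoneda R (ModuleCat.{u} R)).obj Y).rightOp
  have hF := congrArg Quiver.Hom.unop
    (ProjectiveResolution.isoLeftDerivedObj_hom_naturality q P' P φ.hom
      φ.hom_f_zero_comp_π_f_zero F n)
  have hop := congrArg Quiver.Hom.unop
    (HomologicalComplex.homologyOp_hom_naturality (i := n) ((HomologicalComplex.unopFunctor _ _).map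
      ((F.mapHomologicalComplex (ComplexShape.down ℕ)).map φ.hom).op))
  exact (CommSq.horiz_comp ⟨hop⟩ ⟨hF⟩).w

lemma map_derivedExtClass {q : X' ⟶ X} {P' : ProjectiveResolution X'}
    (φ : ProjectiveResolution.Hom P' P q) {f : projectiveCocycles P Y n}
    {f' : projectiveCocycles P' Y n} (h : φ.hom.f n ≫ f.1 = f'.1) :
    (((Ext R (ModuleCat.{u} R) n).map q.op).app Y).hom (derivedExtClass P Y n f) =
      derivedExtClass P' Y n f' := by
  have hnat := congrArg (fun ψ => ψ.hom (cocycleClass (P.complex.linearYonedaObj R Y) n f))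
    (isoExt_inv_naturality φ)
  exact hnat.trans (congrArg (P'.isoExt (R := R) n Y).inv.hom
    (homologyMap_cocycleClass (linearYonedaMap φ.hom Y) h))

/-- The class in the `Ext` of the derived category of a cocycle on a projective resolution. -/
noncomputable def projectiveExtClass (P : ProjectiveResolution X) (Y : ModuleCat.{u} R) (n : ℕ) :
    projectiveCocycles P Y n →ₗ[R] Abelian.Ext X Y n where
  toFun f := P.extMk f.1 (n + 1) rfl f.2
  map_add' f g := (P.add_extMk f.1 g.1 _ _ f.2 g.2).symm
  map_smul' a f := by
    have hf : (a • f).1 = f.1 ≫ (a • 𝟙 Y) := by simp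
    simp only [hf, ← P.extMk_comp_mk₀ _ _ _ f.2, RingHom.id_apply,
      ← Abelian.Ext.smul_eq_comp_mk₀]

lemma projectiveExtClass_surjective : Function.Surjective (projectiveExtClass P Y n) := fun α =>
  let ⟨f, hf, h⟩ := P.extMk_surjective α (n + 1) rfl
  ⟨⟨f, hf⟩, h⟩

lemma projective_extMk_zero_eq_zero_iff {f : P.complex.X 0 ⟶ Y} (hf : P.complex.d 1 0 ≫ f = 0) :
    P.extMk f 1 rfl hf = 0 ↔ f = 0 := by
  have hd (k : ℤ) : P.cochainComplex.d k 1 = 0 :=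
    (CochainComplex.isZero_of_isStrictlyLE _ 0 1 (by lia)).eq_of_tgt _ _
  rw [← P.extEquivCohomologyClass.apply_eq_iff_eq, P.extEquivCohomologyClass_extMk,
    P.extEquivCohomologyClass_zero, CochainComplex.HomComplex.CohomologyClass.mk_eq_zero_iff,
    CochainComplex.HomComplex.Cocycle.toSingleMk_mem_coboundaries_iff _ _ _ _ _ 1 (by simp)]
  simp [hd, eq_comm (a := (0 : P.cochainComplex.X 0 ⟶ Y))]

lemma projectiveExtClass_eq_zero_iff {f : projectiveCocycles P Y n} :
    projectiveExtClass P Y n f = 0 ↔ ∃ g, P.complex.d n (n - 1) ≫ g = f.1 := by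
  cases n with
  | succ n => exact P.extMk_eq_zero_iff f.1 _ rfl f.2 n rfl
  | zero =>
    refine (projective_extMk_zero_eq_zero_iff f.2).trans ⟨fun h => ⟨0, ?_⟩, fun ⟨g, hg⟩ => ?_⟩
    · rw [h, Limits.comp_zero]
    · rw [← hg, P.complex.shape _ _ (by simp), Limits.zero_comp]

lemma mk₀_comp_projectiveExtClass {q : X' ⟶ X} {P' : ProjectiveResolution X'}
    (φ : ProjectiveResolution.Hom P' P q) {f : projectiveCocycles P Y n}
    {f' : projectiveCocycles P' Y n} (h : φ.hom.f n ≫ f.1 = f'.1) :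
    (Abelian.Ext.mk₀ q).comp (projectiveExtClass P Y n f) (zero_add n) =
      projectiveExtClass P' Y n f' := by
  obtain ⟨_, _⟩ := f'
  subst h
  exact ProjectiveResolution.mk₀_comp_extMk f.1 (n + 1) rfl f.2 φ

end Projective

section Injective

variable (I : InjectiveResolution Y)

/-- The `n`-cocycles of the complex `Hom(X, I)`, for an injective resolution `I`. -/
def injectiveCocycles (X : ModuleCat.{u} R) (n : ℕ) : Submodule R (X ⟶ I.cocomplex.X n) :=
  LinearMap.ker (Linear.rightComp R X (I.cocomplex.d n (n + 1)))

/-- The class in the `Ext` of the derived category of a cocycle with values in an injective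
resolution. -/
noncomputable def injectiveExtClass (X : ModuleCat.{u} R) (n : ℕ) :
    injectiveCocycles I X n →ₗ[R] Abelian.Ext X Y n where
  toFun z := I.extMk z.1 (n + 1) rfl z.2
  map_add' z w := (I.add_extMk z.1 w.1 _ _ z.2 w.2).symm
  map_smul' a z := by
    have hz : (a • z).1 = (a • 𝟙 X) ≫ z.1 := by simp
    simp only [hz, ← I.mk₀_comp_extMk _ _ _ z.2, RingHom.id_apply, Abelian.Ext.mk₀_smul,
      Abelian.Ext.smul_comp, Abelian.Ext.mk₀_id_comp]

variable {I} {n : ℕ}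

lemma injectiveExtClass_surjective : Function.Surjective (injectiveExtClass I X n) := fun α =>
  let ⟨z, hz, h⟩ := I.extMk_surjective α (n + 1) rfl
  ⟨⟨z, hz⟩, h⟩

lemma injective_extMk_zero_eq_zero_iff {z : X ⟶ I.cocomplex.X 0}
    (hz : z ≫ I.cocomplex.d 0 1 = 0) : I.extMk z 1 rfl hz = 0 ↔ z = 0 := by
  have hd (k : ℤ) : I.cochainComplex.d (-1) k = 0 :=
    (CochainComplex.isZero_of_isStrictlyGE _ 0 (-1) (by lia)).eq_of_src _ _
  rw [← I.extEquivCohomologyClass.apply_eq_iff_eq, I.extEquivCohomologyClass_extMk,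
    I.extEquivCohomologyClass_zero, CochainComplex.HomComplex.CohomologyClass.mk_eq_zero_iff,
    CochainComplex.HomComplex.Cocycle.fromSingleMk_mem_coboundaries_iff _ _ _ _ _ (-1) (by simp)]
  simp [hd, eq_comm (a := (0 : X ⟶ I.cochainComplex.X 0))]

lemma injectiveExtClass_eq_zero_iff {z : injectiveCocycles I X n} :
    injectiveExtClass I X n z = 0 ↔ ∃ w, w ≫ I.cocomplex.d (n - 1) n = z.1 := by
  cases n with
  | succ n => exact I.extMk_eq_zero_iff z.1 _ rfl z.2 n rfl
  | zero =>
    refine (injective_extMk_zero_eq_zero_iff z.2).trans ⟨fun h => ⟨0, ?_⟩, fun ⟨w, hw⟩ => ?_⟩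
    · rw [h, Limits.zero_comp]
    · rw [← hw, I.cocomplex.shape _ _ (by simp), Limits.comp_zero]

lemma mk₀_comp_injectiveExtClass (q : X' ⟶ X) {z : injectiveCocycles I X n}
    {z' : injectiveCocycles I X' n} (h : q ≫ z.1 = z'.1) :
    (Abelian.Ext.mk₀ q).comp (injectiveExtClass I X n z) (zero_add n) =
      injectiveExtClass I X' n z' := by
  obtain ⟨_, _⟩ := z'
  subst h
  exact I.mk₀_comp_extMk z.1 (n + 1) rfl z.2 q

end Injective

variable (X Y) in
/-- The identification of the two `Ext` modules given by the classes of cocycles on a projective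
resolution of `X`. -/
noncomputable def extComparison (n : ℕ) :
    Abelian.Ext X Y n ≃ₗ[R] ((Ext R (ModuleCat.{u} R) n).obj (op X)).obj Y :=
  equivOfKerEq (projectiveExtClass (ProjectiveResolution.of X) Y n) projectiveExtClass_surjective
    (q := derivedExtClass _ Y n) derivedExtClass_surjective (by
      ext f
      exact projectiveExtClass_eq_zero_iff.trans derivedExtClass_eq_zero_iff.symm)

variable {n : ℕ}

lemma extComparison_projectiveExtClass (f : projectiveCocycles (ProjectiveResolution.of X) Y n) :
    extComparison X Y n (projectiveExtClass _ Y n f) = derivedExtClass _ Y n f :=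
  equivOfKerEq_apply ..

lemma map_extComparison (q : X' ⟶ X) (α : Abelian.Ext X Y n) :
    (((Ext R (ModuleCat.{u} R) n).map q.op).app Y).hom (extComparison X Y n α) =
      extComparison X' Y n ((Abelian.Ext.mk₀ q).comp α (zero_add n)) := by
  obtain ⟨f, rfl⟩ := projectiveExtClass_surjective (P := ProjectiveResolution.of X) α
  let φ : ProjectiveResolution.Hom (ProjectiveResolution.of X') (ProjectiveResolution.of X) q :=
    ⟨ProjectiveResolution.lift q _ _, ProjectiveResolution.lift_commutes_zero q _ _⟩
  have hf : φ.hom.f n ≫ f.1 ∈ projectiveCocycles (ProjectiveResolution.of X') Y n := by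
    rw [mem_projectiveCocycles, ← Category.assoc, ← φ.hom.comm, Category.assoc,
      mem_projectiveCocycles.1 f.2, Limits.comp_zero]
  rw [mk₀_comp_projectiveExtClass φ (f' := ⟨_, hf⟩) rfl, extComparison_projectiveExtClass,
    extComparison_projectiveExtClass, map_derivedExtClass φ (f' := ⟨_, hf⟩) rfl]

section Injective

variable (I : InjectiveResolution Y)

variable (X n) in
/-- The class in the derived functor `Ext` of a cocycle with values in an injective resolution. -/
noncomputable def injectiveDerivedExtClass :
    injectiveCocycles I X n →ₗ[R] ((Ext R (ModuleCat.{u} R) n).obj (op X)).obj Y :=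
  (extComparison X Y n).toLinearMap ∘ₗ injectiveExtClass I X n

variable {I}

lemma injectiveDerivedExtClass_surjective :
    Function.Surjective (injectiveDerivedExtClass X n I) :=
  (extComparison X Y n).surjective.comp injectiveExtClass_surjective

lemma injectiveDerivedExtClass_eq_zero_iff {z : injectiveCocycles I X n} :
    injectiveDerivedExtClass X n I z = 0 ↔ ∃ w, w ≫ I.cocomplex.d (n - 1) n = z.1 :=
  (extComparison X Y n).map_eq_zero_iff.trans injectiveExtClass_eq_zero_iff

lemma map_injectiveDerivedExtClass (q : X' ⟶ X) {z : injectiveCocycles I X n}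
    {z' : injectiveCocycles I X' n} (h : q ≫ z.1 = z'.1) :
    (((Ext R (ModuleCat.{u} R) n).map q.op).app Y).hom (injectiveDerivedExtClass X n I z) =
      injectiveDerivedExtClass X' n I z' :=
  (map_extComparison q _).trans (congrArg _ (mk₀_comp_injectiveExtClass q h))

end Injective

end ExtComparison

section LocalCohomology

open CategoryTheory Opposite Limits

variable {R : Type u} [CommRing R]

section QuotientHom

variable {K : Ideal R} {E : ModuleCat.{u} R}

lemma quotient_hom_ext {f g : ModuleCat.of R (R ⧸ K) ⟶ E}
    (h : f.hom (1 : R ⧸ K) = g.hom (1 : R ⧸ K)) : f = g :=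
  ModuleCat.hom_ext (Submodule.linearMap_qext _ (LinearMap.ext_ring h))

lemma exists_quotient_hom_apply_one {e : E} (he : ∀ a ∈ K, a • e = 0) :
    ∃ f : ModuleCat.of R (R ⧸ K) ⟶ E, f.hom (1 : R ⧸ K) = e :=
  ⟨ModuleCat.ofHom (Submodule.liftQ K (LinearMap.toSpanSingleton R E e) he), one_smul R e⟩

lemma smul_quotient_hom_apply_one (f : ModuleCat.of R (R ⧸ K) ⟶ E) {a : R} (ha : a ∈ K) :
    a • f.hom (1 : R ⧸ K) = 0 := by
  have h : a • (1 : R ⧸ K) = 0 := by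
    rw [Algebra.smul_def, mul_one]
    exact Ideal.Quotient.eq_zero_iff_mem.2 ha
  rw [← map_smul, h, map_zero]

end QuotientHom

variable (J : Ideal R) {Y : ModuleCat.{u} R} (I : InjectiveResolution Y) (n : ℕ)

/-- The cocycle of `Γ_J(I)` which is the value at `1` of a cocycle `R/Jᵗ ⟶ Iⁿ`. -/
noncomputable def evalOne (t : ℕ) :
    injectiveCocycles I (ModuleCat.of R (R ⧸ J ^ t)) n →ₗ[R] torsionCocycles J I.cocomplex n where
  toFun z := ⟨z.1.hom (1 : R ⧸ J ^ t), ⟨t, fun _ => smul_quotient_hom_apply_one z.1⟩,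
    congrArg (fun f : ModuleCat.of R (R ⧸ J ^ t) ⟶ I.cocomplex.X (n + 1) =>
      f.hom (1 : R ⧸ J ^ t)) z.2⟩
  map_add' _ _ := rfl
  map_smul' _ _ := rfl

/-- The map from `Extⁿ(R/Jᵗ, Y)` to the cohomology of `Γ_J(I)` induced by the inclusion of
`Hom(R/Jᵗ, I)` into `Γ_J(I)`. -/
noncomputable def extToTorsionCohomology (t : ℕ) :
    ((Ext R (ModuleCat.{u} R) n).obj (op (ModuleCat.of R (R ⧸ J ^ t)))).obj Y →ₗ[R]
      torsionCohomology J I.cocomplex n :=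
  liftOfSurjective (injectiveDerivedExtClass _ n I) injectiveDerivedExtClass_surjective
    (torsionClass J I.cocomplex n ∘ₗ evalOne J I n t) (by
      intro z hz
      obtain ⟨w, hw⟩ := injectiveDerivedExtClass_eq_zero_iff.1 hz
      exact torsionClass_eq_zero_iff.2 ⟨w.hom (1 : R ⧸ J ^ t),
        ⟨t, fun _ => smul_quotient_hom_apply_one w⟩,
        congrArg (fun f => f.hom (1 : R ⧸ J ^ t)) hw⟩)

variable {J I n}

lemma extToTorsionCohomology_injectiveDerivedExtClass {t : ℕ}
    (z : injectiveCocycles I (ModuleCat.of R (R ⧸ J ^ t)) n) :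
    extToTorsionCohomology J I n t (injectiveDerivedExtClass _ n I z) =
      torsionClass J I.cocomplex n (evalOne J I n t z) :=
  liftOfSurjective_apply _ _ _ _ z

lemma exists_injectiveCocycles_apply_one {t : ℕ} {e : I.cocomplex.X n}
    (he : ∀ a ∈ J ^ t, a • e = 0) (hd : (I.cocomplex.d n (n + 1)).hom e = 0) :
    ∃ z : injectiveCocycles I (ModuleCat.of R (R ⧸ J ^ t)) n, z.1.hom (1 : R ⧸ J ^ t) = e := by
  obtain ⟨f, rfl⟩ := exists_quotient_hom_apply_one he
  exact ⟨⟨f, quotient_hom_ext hd⟩, rfl⟩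

lemma exists_injectiveCocycles_apply_one_eq {s t : ℕ} (h : t ≤ s)
    (z : injectiveCocycles I (ModuleCat.of R (R ⧸ J ^ t)) n) :
    ∃ z' : injectiveCocycles I (ModuleCat.of R (R ⧸ J ^ s)) n,
      z.1.hom (1 : R ⧸ J ^ t) = z'.1.hom (1 : R ⧸ J ^ s) := by
  obtain ⟨z', hz'⟩ := exists_injectiveCocycles_apply_one
    (fun a ha => smul_quotient_hom_apply_one z.1 (Ideal.pow_le_pow_right h ha))
    (evalOne J I n t z).2.2
  exact ⟨z', hz'.symm⟩

variable (J) in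
/-- The canonical surjection `R/Jˢ ⟶ R/Jᵗ` for `t ≤ s`. -/
def quotientPowMap {s t : ℕ} (h : t ≤ s) :
    ModuleCat.of R (R ⧸ J ^ s) ⟶ ModuleCat.of R (R ⧸ J ^ t) :=
  ModuleCat.ofHom (Submodule.mapQ _ _ LinearMap.id (Ideal.pow_le_pow_right h))

variable (J n Y) in
/-- The system of the modules `Extⁿ(R/Jᵗ, Y)`, whose colimit is the local cohomology of `Y`. -/
noncomputable abbrev extQuotientPow : ℕᵒᵖᵒᵖ ⥤ ModuleCat.{u} R :=
  localCohomology.diagram (localCohomology.idealPowersDiagram J) n ⋙ (evaluation _ _).obj Y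

lemma extQuotientPow_map_injectiveDerivedExtClass {s t : ℕ} (h : t ≤ s)
    {z : injectiveCocycles I (ModuleCat.of R (R ⧸ J ^ t)) n}
    {z' : injectiveCocycles I (ModuleCat.of R (R ⧸ J ^ s)) n}
    (hz : z.1.hom (1 : R ⧸ J ^ t) = z'.1.hom (1 : R ⧸ J ^ s)) :
    ((extQuotientPow J Y n).map (homOfLE h).op.op).hom (injectiveDerivedExtClass _ n I z) =
      injectiveDerivedExtClass _ n I z' :=
  map_injectiveDerivedExtClass (quotientPowMap J h) (quotient_hom_ext hz)

variable (J I n) in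
/-- The cohomology of `Γ_J(I)` as a cocone over the modules `Extⁿ(R/Jᵗ, Y)`. -/
noncomputable def torsionCohomologyCocone : Cocone (extQuotientPow J Y n) where
  pt := ModuleCat.of R (torsionCohomology J I.cocomplex n)
  ι :=
    { app := fun t => ModuleCat.ofHom (extToTorsionCohomology J I n t.unop.unop)
      naturality := fun t s f => by
        ext α
        obtain ⟨z, rfl⟩ := injectiveDerivedExtClass_surjective (I := I) α
        have hts : t.unop.unop ≤ s.unop.unop := leOfHom f.unop.unop
        obtain ⟨z', hz⟩ := exists_injectiveCocycles_apply_one_eq hts z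
        refine (congrArg (extToTorsionCohomology J I n _)
          (extQuotientPow_map_injectiveDerivedExtClass hts hz)).trans ?_
        refine Eq.trans ?_ (extToTorsionCohomology_injectiveDerivedExtClass z).symm
        rw [extToTorsionCohomology_injectiveDerivedExtClass]
        exact congrArg _ (Subtype.ext hz.symm) }

variable (J n Y) in
/-- The colimit cocone defining `localCohomology J n`, evaluated at `Y`. -/
noncomputable def localCohomologyCocone : Cocone (extQuotientPow J Y n) :=
  ((evaluation _ _).obj Y).mapCocone
    (colimit.cocone (localCohomology.diagram (localCohomology.idealPowersDiagram J) n))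

variable (J n Y) in
/-- `localCohomology J n` evaluated at `Y` is the colimit of the modules `Extⁿ(R/Jᵗ, Y)`. -/
noncomputable def isColimitLocalCohomologyCocone : IsColimit (localCohomologyCocone J Y n) :=
  isColimitOfPreserves _ (colimit.isColimit _)

lemma localCohomologyCocone_ι_injectiveDerivedExtClass {s t : ℕ} (h : t ≤ s)
    {z : injectiveCocycles I (ModuleCat.of R (R ⧸ J ^ t)) n}
    {z' : injectiveCocycles I (ModuleCat.of R (R ⧸ J ^ s)) n}
    (hz : z.1.hom (1 : R ⧸ J ^ t) = z'.1.hom (1 : R ⧸ J ^ s)) :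
    ((localCohomologyCocone J Y n).ι.app (op (op t))).hom (injectiveDerivedExtClass _ n I z) =
      ((localCohomologyCocone J Y n).ι.app (op (op s))).hom
        (injectiveDerivedExtClass _ n I z') := by
  refine Eq.trans ?_ (congrArg ((localCohomologyCocone J Y n).ι.app (op (op s))).hom
    (extQuotientPow_map_injectiveDerivedExtClass h hz))
  exact (congrArg (fun f => f.hom (injectiveDerivedExtClass _ n I z))
    ((localCohomologyCocone J Y n).w (homOfLE h).op.op)).symm

variable (J I n) in
/-- The map from local cohomology to the cohomology of `Γ_J(I)` induced on the colimit by the maps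
`extToTorsionCohomology`. -/
noncomputable def localCohomologyToTorsionCohomology :
    (localCohomology J n).obj Y →ₗ[R] torsionCohomology J I.cocomplex n :=
  ((isColimitLocalCohomologyCocone J Y n).desc (torsionCohomologyCocone J I n)).hom

lemma localCohomologyToTorsionCohomology_ι {t : ℕ}
    (z : injectiveCocycles I (ModuleCat.of R (R ⧸ J ^ t)) n) :
    localCohomologyToTorsionCohomology J I n (((localCohomologyCocone J Y n).ι.app (op (op t))).hom
      (injectiveDerivedExtClass _ n I z)) = torsionClass J I.cocomplex n (evalOne J I n t z) := by
  refine Eq.trans ?_ (extToTorsionCohomology_injectiveDerivedExtClass z)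
  exact congrArg (fun f => f.hom (injectiveDerivedExtClass _ n I z))
    ((isColimitLocalCohomologyCocone J Y n).fac (torsionCohomologyCocone J I n) (op (op t)))

instance : PreservesColimit (extQuotientPow J Y n) (forget (ModuleCat.{u} R)) := by
  have : PreservesFilteredColimitsOfSize.{0, 0} (forget (ModuleCat.{u} R)) :=
    preservesFilteredColimitsOfSize_shrink.{0, u, 0, u} _
  infer_instance

lemma localCohomologyToTorsionCohomology_surjective :
    Function.Surjective (localCohomologyToTorsionCohomology J I n) := by
  intro h
  obtain ⟨⟨e, ⟨t, ht⟩, hd⟩, rfl⟩ := torsionClass_surjective h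
  obtain ⟨z, rfl⟩ := exists_injectiveCocycles_apply_one ht hd
  exact ⟨_, localCohomologyToTorsionCohomology_ι z⟩

lemma localCohomologyToTorsionCohomology_injective :
    Function.Injective (localCohomologyToTorsionCohomology J I n) := by
  refine (injective_iff_map_eq_zero _).2 fun h h0 => ?_
  obtain ⟨t, α, rfl⟩ := Concrete.isColimit_exists_rep _ (isColimitLocalCohomologyCocone J Y n) h
  obtain ⟨z, rfl⟩ := injectiveDerivedExtClass_surjective (I := I) α
  obtain ⟨e, ⟨s, hs⟩, hde⟩ :=
    torsionClass_eq_zero_iff.1 ((localCohomologyToTorsionCohomology_ι z).symm.trans h0)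
  obtain ⟨w, hw⟩ := exists_quotient_hom_apply_one (K := J ^ (s + t.unop.unop))
    (fun a ha => hs a (Ideal.pow_le_pow_right (Nat.le_add_right _ _) ha))
  have hle : t.unop.unop ≤ s + t.unop.unop := Nat.le_add_left _ _
  obtain ⟨z', hz⟩ := exists_injectiveCocycles_apply_one_eq hle z
  have hz' : injectiveDerivedExtClass _ n I z' = 0 :=
    injectiveDerivedExtClass_eq_zero_iff.2
      ⟨w, quotient_hom_ext ((congrArg (I.cocomplex.d (n - 1) n).hom hw).trans (hde.trans hz))⟩
  exact (localCohomologyCocone_ι_injectiveDerivedExtClass hle hz).trans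
    ((congrArg _ hz').trans (map_zero _))

variable (J I n) in
/-- Local cohomology is the cohomology of `Γ_J(I)`, for an injective resolution `I`. -/
noncomputable def localCohomologyEquiv :
    (localCohomology J n).obj Y ≃ₗ[R] torsionCohomology J I.cocomplex n :=
  .ofBijective _ ⟨localCohomologyToTorsionCohomology_injective,
    localCohomologyToTorsionCohomology_surjective⟩

end LocalCohomology

section InjectiveResolution

open CategoryTheory Limits

variable {R : Type u} [CommRing R] {Y : ModuleCat.{u} R} (I : InjectiveResolution Y)

lemma exact_injectiveResolution_ι : Function.Exact (I.ι.f 0).hom (I.cocomplex.d 0 1).hom := by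
  refine fun z => ⟨fun hz => ?_, ?_⟩
  · have hspan : ModuleCat.ofHom (LinearMap.toSpanSingleton R (I.cocomplex.X 0) z) ≫
        I.cocomplex.d 0 1 = 0 :=
      ModuleCat.hom_ext (LinearMap.ext_ring ((congrArg _ (one_smul R z)).trans hz))
    obtain ⟨l, hl⟩ := KernelFork.IsLimit.lift' I.isLimitKernelFork _ hspan
    exact ⟨l.hom (1 : R), (congrArg (fun f => f.hom (1 : R)) hl).trans (one_smul R z)⟩
  · rintro ⟨m, rfl⟩
    exact congrArg (fun f => f.hom m) I.ι_f_zero_comp_complex_d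

lemma exact_injectiveResolution_d (i : ℕ) :
    Function.Exact (I.cocomplex.d i (i + 1)).hom (I.cocomplex.d (i + 1) (i + 2)).hom :=
  (ShortComplex.ShortExact.moduleCat_exact_iff_function_exact _).1 (I.exact_succ i)

end InjectiveResolution

theorem exists_isPowerColimit_localCohomology {R : Type u} [CommRing R] [IsNoetherianRing R]
    (M : Type u) [AddCommGroup M] [Module R M] {d : ℕ} (x : Fin d → R) :
    ∃ c : ℕ → M →ₗ[R] (localCohomology (Ideal.span (Set.range x)) d).obj (ModuleCat.of R M),
      IsPowerColimit x c := by
  let I := CategoryTheory.InjectiveResolution.of (ModuleCat.of R M)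
  have (i : ℕ) : Module.Injective R (I.cocomplex.X i) :=
    have : CategoryTheory.Injective (ModuleCat.of R (I.cocomplex.X i)) := I.injective i
    Module.injective_module_of_injective_object R _
  have hι : Function.Injective (I.ι.f 0).hom := (ModuleCat.mono_iff_injective _).1 inferInstance
  obtain ⟨c, hc⟩ := exists_isPowerColimit_torsionCohomology (exact_injectiveResolution_d I) hι
    (exact_injectiveResolution_ι I) x
  exact ⟨_, hc.compLinearEquiv (localCohomologyEquiv (Ideal.span (Set.range x)) I d).symm⟩

theorem localCohomology_vanishing_tfae_general {R : Type u} [CommRing R] [IsNoetherianRing R]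
    {M : Type u} [AddCommGroup M] [Module R M] {d : ℕ} (x : Fin d → R) :
    (Subsingleton ((localCohomology (Ideal.span (Set.range x)) d).obj (ModuleCat.of R M)) ↔
        (⨅ n : ℕ, limitClosure (M := M) (fun i => x i ^ (n + 1))) = ⊤) ∧
    (Subsingleton ((localCohomology (Ideal.span (Set.range x)) d).obj (ModuleCat.of R M)) ↔
        moduleDim R ((localCohomology (Ideal.span (Set.range x)) d).obj (ModuleCat.of R M))
          < (d : WithBot ℕ∞)) := by
  obtain ⟨c, hc⟩ := exists_isPowerColimit_localCohomology M x
  exact ⟨hc.subsingleton_iff, fun _ => moduleDim_lt_of_subsingleton d,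
    hc.subsingleton_of_moduleDim_lt⟩

/-- Let `R` be Noetherian, `M` a finitely generated `R`-module of dimension `d`, and
`x = x₁, …, x_d` a sequence of `d` elements of `R`.  The following are equivalent:
(i) `H^d_{(x)}(M) = 0`; (ii) `⋂_{n ≥ 1} (x₁^n, …, x_d^n)^lim_M = M`;
(iii) `dim R/Ann H^d_{(x)}(M) < d`. -/
theorem localCohomology_vanishing_tfae
    {R : Type u} [CommRing R] [IsNoetherianRing R]
    {M : Type u} [AddCommGroup M] [Module R M] [Module.Finite R M]
    {d : ℕ} (hd : moduleDim R M = d) (x : Fin d → R) :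
    (Subsingleton ((localCohomology (Ideal.span (Set.range x)) d).obj (ModuleCat.of R M)) ↔
        (⨅ n : ℕ, limitClosure (M := M) (fun i => x i ^ (n + 1))) = ⊤) ∧
    (Subsingleton ((localCohomology (Ideal.span (Set.range x)) d).obj (ModuleCat.of R M)) ↔
        moduleDim R ((localCohomology (Ideal.span (Set.range x)) d).obj (ModuleCat.of R M))
          < (d : WithBot ℕ∞)) :=
  localCohomology_vanishing_tfae_general x
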